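/- There are no positive integers a, b, c (all strictly positive) such that a·x⃗ + b·y⃗ + c·z⃗ = f⃗ holds in L₀. (In other words, no monomial x^{a}y^{b}z^{c} with a, b, c > 0 has degree f⃗ in L₀.) -/

import Mathlib

/-!
Write `p₁ = 2m`, `p₂ = 2n`, and let `α, β, γ, δ` be the integer coefficients expressing
`a·x⃗ + b·y⃗ + c·z⃗ - f⃗` through the four relations, in the order they are listed in `rels`.
Comparing coordinates gives
`a = m(2α + δ)`, `b = n(2β - δ) + γ`, `c = qγ` and `α + β + γ = 1`.
Positivity of `c` and `a` forces `γ ≥ 1` and `s := 2α + δ ≥ 1`, so, as `n ≥ 1`,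
`b = n(2 - 2γ - s) + γ ≤ n(1 - 2γ) + γ ≤ 1 - γ ≤ 0`, contradicting `b > 0`.
-/

noncomputable section

/-- The free abelian group ℤx⃗ ⊕ ℤy⃗ ⊕ ℤz⃗ ⊕ ℤf⃗, with basis vectors `gen 0 = x⃗`,
`gen 1 = y⃗`, `gen 2 = z⃗`, `gen 3 = f⃗`. -/
abbrev FreeL := Fin 4 → ℤ

/-- The basis vectors x⃗, y⃗, z⃗, f⃗. -/
def gen (i : Fin 4) : FreeL := Pi.single i 1

/-- The subgroup of relations: `p₁·x⃗ − f⃗`, `p₂·y⃗ − f⃗`, `y⃗ + q·z⃗ − f⃗` and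
`(p₁/2)·x⃗ − (p₂/2)·y⃗` (for the type IIB polynomial `x^{p₁} + y^{p₂} + y*z^q`
with the index-2 extension of the grading). -/
def rels (p₁ p₂ q : ℕ) : Submodule ℤ FreeL :=
  Submodule.span ℤ
    {(p₁ : ℤ) • gen 0 - gen 3,
     (p₂ : ℤ) • gen 1 - gen 3,
     gen 1 + (q : ℤ) • gen 2 - gen 3,
     ((p₁ / 2 : ℕ) : ℤ) • gen 0 - ((p₂ / 2 : ℕ) : ℤ) • gen 1}

/-- The grading group L₀, the quotient of ℤx⃗ ⊕ ℤy⃗ ⊕ ℤz⃗ ⊕ ℤf⃗ by the relations. -/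
abbrev L0 (p₁ p₂ q : ℕ) := FreeL ⧸ rels p₁ p₂ q

/-- The class of an element of the free group in L₀. -/
def cls (p₁ p₂ q : ℕ) (v : FreeL) : L0 p₁ p₂ q := Submodule.Quotient.mk v

/-- There are no strictly positive integers `a, b, c` with
`a·x⃗ + b·y⃗ + c·z⃗ = f⃗` in L₀; i.e. no monomial `x^a * y^b * z^c` with
`a, b, c > 0` has degree f⃗. -/
theorem no_monomial_xyz_of_degree_f (p₁ p₂ q : ℕ)
    (he₁ : Even p₁) (he₂ : Even p₂) (hp₁ : 2 ≤ p₁) (hp₂ : 2 ≤ p₂) (hq : 1 ≤ q)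
    (a b c : ℕ) (ha : 0 < a) (hb : 0 < b) (hc : 0 < c)
    (h : cls p₁ p₂ q ((a : ℤ) • gen 0 + (b : ℤ) • gen 1 + (c : ℤ) • gen 2)
           = cls p₁ p₂ q (gen 3)) :
    False := by
  obtain ⟨m, rfl⟩ := he₁
  obtain ⟨n, rfl⟩ := he₂
  have hm2 : (m + m) / 2 = m := by omega
  have hn2 : (n + n) / 2 = n := by omega
  unfold cls at h
  rw [Submodule.Quotient.eq, rels, hm2, hn2] at h
  simp only [Submodule.mem_span_insert, Submodule.mem_span_singleton] at h
  obtain ⟨α, _, ⟨β, _, ⟨γ, _, ⟨δ, rfl⟩, rfl⟩, rfl⟩, h⟩ := h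
  have h0 := congrFun h 0
  have h1 := congrFun h 1
  have h2 := congrFun h 2
  have h3 := congrFun h 3
  simp [gen] at h0 h1 h2 h3
  have hγ : 1 ≤ γ := by
    have : 0 < γ * (q : ℤ) := by rw [← h2]; exact_mod_cast hc
    exact pos_of_mul_pos_left this (by positivity)
  have hs : 1 ≤ 2 * α + δ := by
    have : 0 < (2 * α + δ) * (m : ℤ) := by
      have : (0 : ℤ) < a := by exact_mod_cast ha
      linarith
    exact pos_of_mul_pos_left this (by positivity)
  have hn : (1 : ℤ) ≤ n := by omega
  -- eliminate `β = 1 - α - γ` from the `y⃗`-coordinate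
  have hbeq : (b : ℤ) = n * (2 - 2 * γ - (2 * α + δ)) + γ := by
    obtain rfl : β = 1 - α - γ := by linarith
    linarith
  have hb' : (0 : ℤ) < b := by exact_mod_cast hb
  nlinarith [mul_nonneg (sub_nonneg.2 hn) (sub_nonneg.2 hγ),
    mul_nonneg (by positivity : (0 : ℤ) ≤ n) (sub_nonneg.2 hs)]
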